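/- arXiv:1409.3702 — 3 statements merged into one kernel-verified Lean document; each statement's English description precedes it below -/
import Mathlib

section
/- Let 0 < r ≤ R be real numbers and let I be one of the intervals [r,R], ]r,R], [r,R[, ]r,R[, [r,∞[, ]r,∞[. Then there exist sequences a = (aᵢ)_{i≥1}, b = (bᵢ)_{i≥1}, c = (cᵢ)_{i≥1} of positive integers such that J(a,b,c) = I. -/
open scoped ENNReal NNReal Classical
open Filter MeasureTheory

/-- A countable directed graph: countable sets of vertices and edges with
source and range maps. -/
structure DirGraph where
  V : Type
  E : Type
  countV : Countable V
  countE : Countable E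
  s : E → V
  r : E → V

namespace DirGraph

attribute [instance] countV countE

variable (G : DirGraph)

/-- `μ` is a finite path (a vertex counts as the empty path). -/
def IsPath (μ : List G.E) : Prop := μ.Chain' (fun e f => G.r e = G.s f)

/-- `μ` is a finite path from `u` to `w`. -/
def IsPathFrom (μ : List G.E) (u w : G.V) : Prop :=
  G.IsPath μ ∧ (∀ e ∈ μ.head?, G.s e = u) ∧ (∀ e ∈ μ.getLast?, G.r e = w) ∧ (μ = [] → u = w)

/-- A function `F : E → ℝ` extended to finite paths. -/
def Fsum (F : G.E → ℝ) (μ : List G.E) : ℝ := (μ.map F).sum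

/-- The matrix `A(β)` over the vertices, with entries in `[0,∞]`:
`A(β)_{uw} = Σ_{e : u → w} e^{-β F(e)}`. -/
noncomputable def Amat (F : G.E → ℝ) (β : ℝ) (u w : G.V) : ℝ≥0∞ :=
  ∑' e : {e : G.E // G.s e = u ∧ G.r e = w}, ENNReal.ofReal (Real.exp (-β * F e.1))

/-- The powers of the matrix `A(β)`, defined recursively; `A(β)⁰` is the identity matrix. -/
noncomputable def Apow (F : G.E → ℝ) (β : ℝ) : ℕ → G.V → G.V → ℝ≥0∞
  | 0, u, w => if u = w then 1 else 0
  | n + 1, u, w => ∑' x : G.V, G.Amat F β u x * Apow F β n x w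

/-- A sink is a vertex emitting no edges. -/
def IsSink (v : G.V) : Prop := ∀ e : G.E, G.s e ≠ v

/-- An infinite emitter is a vertex emitting infinitely many edges. -/
def InfEmitter (v : G.V) : Prop := {e : G.E | G.s e = v}.Infinite

/-- A set of vertices is hereditary when it is closed under following edges. -/
def Hereditary (H : Set G.V) : Prop := ∀ e : G.E, G.s e ∈ H → G.r e ∈ H

/-- A set of vertices `H` is saturated when every vertex of `V ∖ V∞` all of whose
successors lie in `H` belongs to `H`. -/
def Saturated (H : Set G.V) : Prop :=
  ∀ v : G.V, ¬ G.IsSink v → ¬ G.InfEmitter v → (∀ e : G.E, G.s e = v → G.r e ∈ H) → v ∈ H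

/-- `G` is cofinal when the only nonempty hereditary and saturated set of
vertices is the whole vertex set. -/
def Cofinal : Prop :=
  ∀ H : Set G.V, H.Nonempty → G.Hereditary H → G.Saturated H → H = Set.univ

/-- The set of non-wandering vertices: those lying on a loop of length ≥ 1. -/
def NW : Set G.V := {v | ∃ μ : List G.E, μ ≠ [] ∧ G.IsPathFrom μ v v}

/-- `G` is strongly connected when there is a finite path between any two vertices. -/
def StronglyConnected : Prop := ∀ u w : G.V, ∃ μ : List G.E, G.IsPathFrom μ u w

/-- `G` is row-finite when every vertex emits only finitely many edges. -/
def RowFinite : Prop := ∀ v : G.V, {e : G.E | G.s e = v}.Finite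

/-- `ψ` is an `A(β)`-harmonic vector. -/
def Harmonic (F : G.E → ℝ) (β : ℝ) (ψ : G.V → ℝ≥0) : Prop :=
  ∀ v : G.V, ∑' w : G.V, G.Amat F β v w * ψ w = (ψ v : ℝ≥0∞)

/-- `A(β)` is transient when `Σ_n A(β)ⁿ_{vv} < ∞` for every vertex. -/
def Transient (F : G.E → ℝ) (β : ℝ) : Prop :=
  ∀ v : G.V, ∑' n : ℕ, G.Apow F β n v v ≠ ⊤

/-- `A(β)` is recurrent when `Σ_n A(β)ⁿ_{vv} = ∞` for some vertex. -/
def Recurrent (F : G.E → ℝ) (β : ℝ) : Prop :=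
  ∃ v : G.V, ∑' n : ℕ, G.Apow F β n v v = ⊤

/-- An exit path: a sequence of vertices joined by edges which leaves every
finite set of vertices. -/
def IsExitPath (t : ℕ → G.V) : Prop :=
  (∀ i : ℕ, ∃ e : G.E, G.s e = t i ∧ G.r e = t (i + 1)) ∧
  ∀ M : Set G.V, M.Finite → ∃ N : ℕ, ∀ i : ℕ, N ≤ i → t i ∉ M

/-- Tail equivalence of vertex sequences. -/
def TailEquiv (t t' : ℕ → G.V) : Prop :=
  ∃ k : ℤ, ∃ N : ℕ, ∀ i : ℕ, N ≤ i → 0 ≤ (i : ℤ) + k ∧ t ((i : ℤ) + k).toNat = t' i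

/-- A simple loop based at `v`: a loop which returns to `v` only at the very end. -/
def IsSimpleLoop (v : G.V) (μ : List G.E) : Prop :=
  μ ≠ [] ∧ G.IsPathFrom μ v v ∧
  ∀ (i : ℕ) (h : i + 1 < μ.length), G.r (μ.get ⟨i, Nat.lt_of_succ_lt h⟩) ≠ v

/-- `lⁿ_{vv}(β)`: the weighted number of simple loops of length `n` based at `v`. -/
noncomputable def loopSum (F : G.E → ℝ) (β : ℝ) (v : G.V) (n : ℕ) : ℝ≥0∞ :=
  ∑' μ : {μ : List G.E // μ.length = n ∧ G.IsSimpleLoop v μ},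
    ENNReal.ofReal (Real.exp (-β * G.Fsum F μ.1))

/-- The space `P(G)` of infinite paths in `G`. -/
def PathSpace : Type := {p : ℕ → G.E // ∀ i : ℕ, G.r (p i) = G.s (p (i + 1))}

/-- The Borel σ-algebra of `P(G)` as a subspace of the product `E^ℕ` with `E`
discrete (for a countable discrete space, the Borel σ-algebra is the power set). -/
instance : MeasurableSpace G.PathSpace :=
  letI : MeasurableSpace G.E := ⊤
  inferInstanceAs (MeasurableSpace {p : ℕ → G.E // ∀ i : ℕ, G.r (p i) = G.s (p (i + 1))})

/-- The cylinder set `Z'(v)` of infinite paths starting at the vertex `v`. -/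
def cylV (v : G.V) : Set G.PathSpace := {p | G.s (p.1 0) = v}

/-- The cylinder set `Z'(μ)` of infinite paths beginning with the finite path `μ`. -/
def cylP (μ : List G.E) : Set G.PathSpace :=
  {p | ∀ (i : ℕ) (h : i < μ.length), p.1 i = μ.get ⟨i, h⟩}

/-- The set `P(G)_wan` of wandering infinite paths: those visiting each vertex
only finitely many times. -/
def wanSet : Set G.PathSpace := {p | ∀ v : G.V, {i : ℕ | G.s (p.1 i) = v}.Finite}

end DirGraph

/-- The set `J(a,b,c)` of inverse temperatures determined by three sequences of
positive integers (the sequences are indexed from 1). -/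
def Jset (a b c : ℕ → ℕ) : Set ℝ :=
  {β : ℝ |
    Summable (fun k : ℕ =>
      (b (k + 1) : ℝ) / (∏ i ∈ Finset.range (k + 1), (a (i + 1) : ℝ)) *
        Real.exp (-((k + 1 : ℕ) : ℝ) * β)) ∧
    Summable (fun k : ℕ =>
      (c (k + 1) : ℝ) / (∏ i ∈ Finset.range (k + 1), (a (i + 1) : ℝ)) *
        Real.exp (((k + 1 : ℕ) : ℝ) * β))}

/-!
Take `aᵢ = i`, so that both series have denominators `k!`. Since `∑ e^{kβ} / k!` converges
everywhere, replacing positive coefficients `x k` by `⌈k! * x k⌉ / k!` does not change where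
`∑ x k * e^{kβ}` converges, so integrality costs nothing. Positive real coefficients realize every
lower set of `ℝ`: up to a translation, `1` gives `β < 0` and `1 / (k + 1) ^ 2` gives `β ≤ 0`, while
`1 / k!` and `k!` give everything and nothing. An interval is the intersection of an upper set,
which is the reflection of a lower set, with a lower set.
-/

section LowerSets

variable {α : Type*} [ConditionallyCompleteLinearOrder α] {L : Set α}

lemma eq_univ_or_Iio_or_Iic_of_isLowerSet (hL : IsLowerSet L) (hne : L.Nonempty) :
    L = Set.univ ∨ (∃ s, L = Set.Iio s) ∨ ∃ s, L = Set.Iic s := by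
  by_cases hbdd : BddAbove L
  · have hlub : IsLUB L (sSup L) := isLUB_csSup hne hbdd
    refine .inr ?_
    by_cases hmem : sSup L ∈ L
    · exact .inr ⟨sSup L, Set.Subset.antisymm hlub.1 fun _ hx => hL hx hmem⟩
    · refine .inl ⟨sSup L, Set.Subset.antisymm (fun x hx => ?_) fun x hx => ?_⟩
      · exact (hlub.1 hx).lt_of_ne fun h => hmem (h ▸ hx)
      · obtain ⟨y, hy, hxy⟩ := (lt_isLUB_iff hlub).1 hx
        exact hL hxy.le hy
  · refine .inl (Set.eq_univ_of_forall fun x => ?_)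
    obtain ⟨y, hy, hxy⟩ := not_bddAbove_iff.1 hbdd x
    exact hL hxy.le hy

end LowerSets

/-- The domain of convergence of the series `∑ x k * e^{kβ}`, as a set of real numbers `β`. The sum
starts at `k = 0`, although the series defining `Jset` start at `k = 1`: the constant term does not
affect convergence. -/
def expSeriesDomain (x : ℕ → ℝ) : Set ℝ :=
  {β | Summable fun k : ℕ => x k * Real.exp (k * β)}

section ExpSeriesDomain

variable {w x : ℕ → ℝ} {L : Set ℝ} {β : ℝ}

lemma mem_expSeriesDomain :
    β ∈ expSeriesDomain x ↔ Summable fun k : ℕ => x k * Real.exp (k * β) :=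
  Iff.rfl

lemma mem_expSeriesDomain_exp_mul (s : ℝ) :
    β ∈ expSeriesDomain (fun k => Real.exp (-(k * s)) * x k) ↔ β - s ∈ expSeriesDomain x := by
  simp only [mem_expSeriesDomain]
  refine summable_congr fun k => ?_
  rw [mul_sub, sub_eq_neg_add, Real.exp_add]
  ring

-- The termwise product of the two series is constantly `1`, so their terms cannot both tend to `0`.
lemma neg_notMem_expSeriesDomain_inv (hx : ∀ k, x k ≠ 0) (hβ : β ∈ expSeriesDomain x) :
    -β ∉ expSeriesDomain x⁻¹ := by
  intro hβ'
  have hprod := hβ.tendsto_atTop_zero.mul hβ'.tendsto_atTop_zero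
  have hone (k : ℕ) : x k * Real.exp (k * β) * (x⁻¹ k * Real.exp (k * -β)) = 1 := by
    rw [Pi.inv_apply, mul_neg, Real.exp_neg]
    field_simp [hx k]
  simp only [hone, mul_zero] at hprod
  exact one_ne_zero (tendsto_nhds_unique tendsto_const_nhds hprod)

lemma expSeriesDomain_inv_eq_empty (hx : ∀ k, x k ≠ 0) (hdom : expSeriesDomain x = Set.univ) :
    expSeriesDomain x⁻¹ = ∅ := by
  refine Set.eq_empty_of_forall_notMem fun β => ?_
  rw [← neg_neg β]
  exact neg_notMem_expSeriesDomain_inv hx (hdom ▸ Set.mem_univ (-β))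

lemma expSeriesDomain_inv_factorial :
    expSeriesDomain (fun k => (k.factorial : ℝ))⁻¹ = Set.univ := by
  refine Set.eq_univ_of_forall fun β => ?_
  refine (Real.summable_pow_div_factorial (Real.exp β)).congr fun k => ?_
  rw [Pi.inv_apply, Real.exp_nat_mul, div_eq_inv_mul]

lemma expSeriesDomain_one : expSeriesDomain 1 = Set.Iio 0 := by
  ext β
  simp only [mem_expSeriesDomain, Pi.one_apply, one_mul, Real.exp_nat_mul,
    summable_geometric_iff_norm_lt_one, Real.norm_eq_abs, Real.abs_exp, Real.exp_lt_one_iff,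
    Set.mem_Iio]

lemma neg_mem_expSeriesDomain_succ_sq (hβ : 0 < β) :
    -β ∈ expSeriesDomain (fun k => ((k : ℝ) + 1) ^ 2) := by
  have hlt : ‖Real.exp (-β)‖ < 1 := by simpa
  have hpow (j : ℕ) := summable_pow_mul_geometric_of_norm_lt_one j hlt
  refine (((hpow 2).add ((hpow 1).mul_left 2)).add (hpow 0)).congr fun k => ?_
  rw [Real.exp_nat_mul]
  ring

lemma expSeriesDomain_inv_succ_sq :
    expSeriesDomain (fun k => ((k : ℝ) + 1) ^ 2)⁻¹ = Set.Iic 0 := by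
  refine Set.Subset.antisymm (fun β hβ => ?_) fun β hβ => ?_
  · by_contra hpos
    have hmem := neg_mem_expSeriesDomain_succ_sq (not_le.1 hpos)
    refine neg_notMem_expSeriesDomain_inv (fun k => pow_ne_zero 2 k.cast_add_one_ne_zero) hmem ?_
    rwa [neg_neg]
  · have hsum : Summable fun k : ℕ => (((k : ℝ) + 1) ^ 2)⁻¹ := by
      simpa using (summable_nat_add_iff 1).2 (Real.summable_nat_pow_inv.2 one_lt_two)
    have hcoeff (k : ℕ) : 0 ≤ (((k : ℝ) + 1) ^ 2)⁻¹ := inv_nonneg.2 (sq_nonneg _)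
    have hexp (k : ℕ) : Real.exp (k * β) ≤ 1 :=
      Real.exp_le_one_iff.2 (mul_nonpos_of_nonneg_of_nonpos k.cast_nonneg hβ)
    exact hsum.of_nonneg_of_le (fun k => mul_nonneg (hcoeff k) (Real.exp_pos _).le)
      fun k => mul_le_of_le_one_right (hcoeff k) (hexp k)

lemma expSeriesDomain_exp (s : ℝ) :
    expSeriesDomain (fun k => Real.exp (-(k * s))) = Set.Iio s := by
  ext β
  rw [← mul_one (fun k : ℕ => Real.exp (-(k * s)))]
  refine (mem_expSeriesDomain_exp_mul s).trans ?_
  rw [expSeriesDomain_one, Set.mem_Iio, sub_neg, Set.mem_Iio]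

lemma expSeriesDomain_exp_mul_inv_succ_sq (s : ℝ) :
    expSeriesDomain (fun k => Real.exp (-(k * s)) * (fun j : ℕ => ((j : ℝ) + 1) ^ 2)⁻¹ k) =
      Set.Iic s := by
  ext β
  rw [mem_expSeriesDomain_exp_mul, expSeriesDomain_inv_succ_sq, Set.mem_Iic, sub_nonpos,
    Set.mem_Iic]

lemma exists_pos_expSeriesDomain_eq (hL : IsLowerSet L) :
    ∃ x : ℕ → ℝ, (∀ k, 0 < x k) ∧ expSeriesDomain x = L := by
  have hfact (k : ℕ) : (0 : ℝ) < k.factorial := by positivity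
  rcases L.eq_empty_or_nonempty with rfl | hne
  · refine ⟨_, fun k => ?_, expSeriesDomain_inv_eq_empty (fun k => (inv_pos.2 (hfact k)).ne')
      expSeriesDomain_inv_factorial⟩
    simpa using hfact k
  · rcases eq_univ_or_Iio_or_Iic_of_isLowerSet hL hne with rfl | ⟨s, rfl⟩ | ⟨s, rfl⟩
    · exact ⟨_, fun k => inv_pos.2 (hfact k), expSeriesDomain_inv_factorial⟩
    · exact ⟨_, fun k => Real.exp_pos _, expSeriesDomain_exp s⟩
    · exact ⟨_, fun k => mul_pos (Real.exp_pos _) (inv_pos.2 (pow_pos k.cast_add_one_pos 2)),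
        expSeriesDomain_exp_mul_inv_succ_sq s⟩

lemma expSeriesDomain_natCeil_div (hw : ∀ k, 0 < w k) (hx : ∀ k, 0 ≤ x k)
    (hdom : expSeriesDomain w⁻¹ = Set.univ) :
    expSeriesDomain (fun k => ⌈w k * x k⌉₊ / w k) = expSeriesDomain x := by
  have le_ceil (k : ℕ) : x k ≤ ⌈w k * x k⌉₊ / w k := by
    rw [le_div_iff₀' (hw k)]
    exact Nat.le_ceil _
  have ceil_le (k : ℕ) : ⌈w k * x k⌉₊ / w k ≤ x k + w⁻¹ k := by
    rw [div_le_iff₀' (hw k), mul_add, Pi.inv_apply, mul_inv_cancel₀ (hw k).ne']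
    exact (Nat.ceil_lt_add_one (mul_nonneg (hw k).le (hx k))).le
  refine Set.Subset.antisymm (fun β hβ => ?_) fun β hβ => ?_
  · exact hβ.of_nonneg_of_le (fun k => mul_nonneg (hx k) (Real.exp_pos _).le)
      fun k => mul_le_mul_of_nonneg_right (le_ceil k) (Real.exp_pos _).le
  · have hβw : β ∈ expSeriesDomain w⁻¹ := hdom ▸ Set.mem_univ β
    refine (hβ.add hβw).of_nonneg_of_le (fun k => ?_) fun k => ?_
    · exact mul_nonneg ((hx k).trans (le_ceil k)) (Real.exp_pos _).le
    · rw [← add_mul]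
      exact mul_le_mul_of_nonneg_right (ceil_le k) (Real.exp_pos _).le

lemma exists_pos_nat_expSeriesDomain_div_factorial_eq (hL : IsLowerSet L) :
    ∃ n : ℕ → ℕ, (∀ k, 0 < n k) ∧ expSeriesDomain (fun k => n k / k.factorial) = L := by
  obtain ⟨x, hx, rfl⟩ := exists_pos_expSeriesDomain_eq hL
  have hfact (k : ℕ) : (0 : ℝ) < k.factorial := by positivity
  exact ⟨fun k => ⌈k.factorial * x k⌉₊, fun k => Nat.ceil_pos.2 (mul_pos (hfact k) (hx k)),
    expSeriesDomain_natCeil_div hfact (fun k => (hx k).le) expSeriesDomain_inv_factorial⟩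

end ExpSeriesDomain

open scoped Pointwise in
lemma Jset_eq_neg_inter (a b c : ℕ → ℕ) :
    Jset a b c =
      -expSeriesDomain (fun k => b k / ∏ i ∈ Finset.range k, (a (i + 1) : ℝ)) ∩
        expSeriesDomain (fun k => c k / ∏ i ∈ Finset.range k, (a (i + 1) : ℝ)) := by
  ext β
  rw [Set.mem_inter_iff, Set.mem_neg, mem_expSeriesDomain, mem_expSeriesDomain,
    ← summable_nat_add_iff 1, ← summable_nat_add_iff (f := fun k : ℕ => _ / _ * Real.exp (k * β)) 1]
  simp only [← neg_mul_comm]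
  rfl

open scoped Pointwise in
lemma Jset_max_one (b c : ℕ → ℕ) :
    Jset (fun i => max i 1) b c =
      -expSeriesDomain (fun k => b k / k.factorial) ∩
        expSeriesDomain (fun k => c k / k.factorial) := by
  have hprod (k : ℕ) : ∏ i ∈ Finset.range k, ((max (i + 1) 1 : ℕ) : ℝ) = k.factorial := by
    rw [← Finset.prod_range_add_one_eq_factorial, Nat.cast_prod]
    exact Finset.prod_congr rfl fun i _ => by rw [max_eq_left (Nat.le_add_left 1 i)]
  simp only [Jset_eq_neg_inter, hprod]

theorem stmt_16_general (I : Set ℝ) (hI : I.OrdConnected) :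
    ∃ a b c : ℕ → ℕ, (∀ i, 0 < a i) ∧ (∀ i, 0 < b i) ∧ (∀ i, 0 < c i) ∧
      Jset a b c = I := by
  obtain ⟨b, hb, hbI⟩ := exists_pos_nat_expSeriesDomain_div_factorial_eq (upperClosure I).upper.neg
  obtain ⟨c, hc, hcI⟩ := exists_pos_nat_expSeriesDomain_div_factorial_eq (lowerClosure I).lower
  -- `a` is the identity, except that `a 0`, which `Jset` ignores, also has to be positive.
  refine ⟨fun i => max i 1, b, c, fun i => lt_max_of_lt_right one_pos, hb, hc, ?_⟩
  rw [Jset_max_one, hbI, hcI, neg_neg]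
  exact hI.upperClosure_inter_lowerClosure

/-- every interval of the six listed forms arises as `J(a,b,c)`. -/
theorem stmt_16 (r R : ℝ) (hr : 0 < r) (hrR : r ≤ R) (I : Set ℝ)
    (hI : I = Set.Icc r R ∨ I = Set.Ioc r R ∨ I = Set.Ico r R ∨ I = Set.Ioo r R ∨
      I = Set.Ici r ∨ I = Set.Ioi r) :
    ∃ a b c : ℕ → ℕ, (∀ i, 0 < a i) ∧ (∀ i, 0 < b i) ∧ (∀ i, 0 < c i) ∧
      Jset a b c = I :=
  stmt_16_general I <| by rcases hI with rfl | rfl | rfl | rfl | rfl | rfl <;> infer_instance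
end

section
/- Let D ∈ ]0,1[ and let (aₙ)_{n≥2} be a sequence of non-negative integers such that Σ_{n≥2} aₙ Dⁿ < 1 − D. Then there is a sequence (bₙ)_{n≥1} of non-negative integers such that: (i) b₁ = 1; (ii) bₙ ≥ aₙ for all n ≥ 2; (iii) bₙ − aₙ ≥ 2 for infinitely many n; (iv) limsup_n (bₙ)^{1/n} = D^{−1}; and (v) Σ_{n≥1} bₙ Dⁿ = 1. -/
open scoped ENNReal NNReal Classical
open Filter MeasureTheory

/-!
The series `∑ aₙ Dⁿ` leaves a positive amount of mass to be distributed over the indices `n ≥ 2`.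
Part of it goes to the terms `⌊c / (n² Dⁿ)⌋ Dⁿ ≤ c / n²` with `c` small: they cost little, yet these
coefficients eventually exceed `zⁿ` for every `z < D⁻¹`. What is left is written as `∑ dₙ Dⁿ` by the
greedy algorithm, whose remainder after step `n` is less than `Dⁿ`. Convergence of the resulting
series bounds `bₙ` by `D⁻ⁿ` eventually, so `bₙ ^ (1 / n)` even converges to `D⁻¹`.
-/

open scoped Topology

section Greedy

/-- The part of `r` not yet represented when, for each `i < n` in turn, the largest possible
integer multiple of `w i` has been subtracted. A weight `w i = 0` is skipped, as `t / 0 = 0`. -/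
noncomputable def greedyRemainder (w : ℕ → ℝ≥0) (r : ℝ≥0) : ℕ → ℝ≥0
  | 0 => r
  | n + 1 => greedyRemainder w r n - ⌊greedyRemainder w r n / w n⌋₊ * w n

/-- The coefficient of `w n` in the greedy representation of `r` as a combination of the weights
`w` with natural number coefficients. -/
noncomputable def greedyDigit (w : ℕ → ℝ≥0) (r : ℝ≥0) (n : ℕ) : ℕ :=
  ⌊greedyRemainder w r n / w n⌋₊

variable (w : ℕ → ℝ≥0) (r : ℝ≥0) (n : ℕ)

lemma greedyDigit_mul_add_greedyRemainder_succ :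
    greedyDigit w r n * w n + greedyRemainder w r (n + 1) = greedyRemainder w r n :=
  add_tsub_cancel_of_le (mul_le_of_le_div₀ zero_le zero_le (Nat.floor_le zero_le))

lemma sum_greedyDigit_mul_add_greedyRemainder :
    ∑ i ∈ Finset.range n, greedyDigit w r i * w i + greedyRemainder w r n = r := by
  induction n with
  | zero => simp [greedyRemainder]
  | succ n ih =>
    rw [Finset.sum_range_succ, add_assoc, greedyDigit_mul_add_greedyRemainder_succ, ih]

variable {w n}

lemma greedyDigit_eq_zero (hw : w n = 0) : greedyDigit w r n = 0 := by
  simp [greedyDigit, hw]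

lemma greedyRemainder_succ_lt (hw : w n ≠ 0) : greedyRemainder w r (n + 1) < w n := by
  have hlt : greedyRemainder w r n < (greedyDigit w r n + 1) * w n :=
    (div_lt_iff₀ (pos_iff_ne_zero.2 hw)).1 (Nat.lt_floor_add_one _)
  rwa [← greedyDigit_mul_add_greedyRemainder_succ, add_one_mul, add_lt_add_iff_left] at hlt

lemma hasSum_greedyDigit_mul (hw : ∀ᶠ n in atTop, w n ≠ 0) (hw' : Tendsto w atTop (𝓝 0)) :
    HasSum (fun n ↦ greedyDigit w r n * w n) r := by
  have hrem : Tendsto (greedyRemainder w r) atTop (𝓝 0) :=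
    (tendsto_add_atTop_iff_nat 1).1 <| tendsto_of_tendsto_of_tendsto_of_le_of_le'
      tendsto_const_nhds hw' (.of_forall fun _ ↦ zero_le)
      (hw.mono fun _ hn ↦ (greedyRemainder_succ_lt r hn).le)
  have hsum (n : ℕ) :
      ∑ i ∈ Finset.range n, greedyDigit w r i * w i = r - greedyRemainder w r n :=
    eq_tsub_of_add_eq (sum_greedyDigit_mul_add_greedyRemainder w r n)
  rw [NNReal.hasSum_iff_tendsto_nat]
  simpa only [hsum, tsub_zero] using tendsto_const_nhds.sub hrem

end Greedy

section PowerSeries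

variable {x : ℝ≥0}

lemma exists_hasSum_natCast_mul_pow (hx₀ : x ≠ 0) (hx₁ : x < 1) (N : ℕ) (r : ℝ≥0) :
    ∃ d : ℕ → ℕ, (∀ n < N, d n = 0) ∧ HasSum (fun n ↦ (d n : ℝ≥0) * x ^ n) r := by
  let w (n : ℕ) : ℝ≥0 := if n < N then 0 else x ^ n
  have hw_eq : ∀ᶠ n in atTop, w n = x ^ n :=
    (eventually_ge_atTop N).mono fun n hn ↦ if_neg hn.not_gt
  have hw : ∀ᶠ n in atTop, w n ≠ 0 := hw_eq.mono fun n hn ↦ hn ▸ pow_ne_zero n hx₀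
  have hw' : Tendsto w atTop (𝓝 0) :=
    (NNReal.tendsto_pow_atTop_nhds_zero_of_lt_one hx₁).congr' (hw_eq.mono fun _ ↦ Eq.symm)
  have hd : ∀ n < N, greedyDigit w r n = 0 := fun n hn ↦
    greedyDigit_eq_zero r (if_pos hn)
  refine ⟨greedyDigit w r, hd, (hasSum_greedyDigit_mul r hw hw').congr_fun fun n ↦ ?_⟩
  by_cases hn : n < N
  · simp [hd n hn]
  · simp [w, hn]

lemma eventually_pow_le_natFloor_div {c z : ℝ≥0} (hx₀ : x ≠ 0) (hx₁ : x < 1) (hc : c ≠ 0)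
    (hz : z < x⁻¹) :
    ∀ᶠ n : ℕ in atTop, z ^ n ≤ ⌊c / (n ^ 2 * x ^ n)⌋₊ := by
  have hdecay {q : ℝ≥0} (hq : q < 1) : Tendsto (fun n : ℕ ↦ (n : ℝ≥0) ^ 2 * q ^ n) atTop (𝓝 0) := by
    rw [← NNReal.tendsto_coe]
    push_cast
    exact tendsto_pow_const_mul_const_pow_of_abs_lt_one 2 (by simpa using hq)
  have hzx : z * x < 1 := (NNReal.lt_inv_iff_mul_lt hx₀).1 hz
  have hlim := (hdecay hzx).add (hdecay hx₁)
  rw [add_zero] at hlim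
  filter_upwards [hlim.eventually_lt_const (pos_iff_ne_zero.2 hc), eventually_gt_atTop 0]
    with n hn hn₀
  have hpos : 0 < (n : ℝ≥0) ^ 2 * x ^ n := by positivity
  have hle : z ^ n + 1 ≤ c / (n ^ 2 * x ^ n) := by
    rw [le_div_iff₀ hpos]
    refine le_of_eq_of_le ?_ hn.le
    rw [mul_pow]
    ring
  exact (lt_of_add_lt_add_right (hle.trans_lt (Nat.lt_floor_add_one _))).le

lemma exists_tsum_natCast_mul_pow_lt (hx₀ : x ≠ 0) (hx₁ : x < 1) (N : ℕ) {ε : ℝ≥0∞}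
    (hε : ε ≠ 0) :
    ∃ e : ℕ → ℕ, (∀ n < N, e n = 0) ∧ ∑' n, (e n : ℝ≥0∞) * x ^ n < ε ∧
      ∀ z < x⁻¹, ∀ᶠ n in atTop, z ^ n ≤ e n := by
  have hfin : ∑' n : ℕ, ((((n : ℝ≥0) ^ 2)⁻¹ : ℝ≥0) : ℝ≥0∞) ≠ ⊤ :=
    ENNReal.tsum_coe_ne_top_iff_summable.2 (NNReal.summable_coe.1 (by simp))
  obtain ⟨c, hc, hcε⟩ := ENNReal.exists_nnreal_pos_mul_lt hfin hε
  refine ⟨fun n ↦ if n < N then 0 else ⌊c / (n ^ 2 * x ^ n)⌋₊, fun n hn ↦ if_pos hn, ?_,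
    fun z hz ↦ ?_⟩
  · refine lt_of_le_of_lt ?_ hcε
    rw [← ENNReal.tsum_mul_left]
    refine ENNReal.tsum_le_tsum fun n ↦ ?_
    have hterm : (⌊c / (n ^ 2 * x ^ n)⌋₊ : ℝ≥0) * x ^ n ≤ c * ((n : ℝ≥0) ^ 2)⁻¹ := by
      rw [← div_div, ← div_eq_mul_inv]
      exact mul_le_of_le_div₀ zero_le zero_le (Nat.floor_le zero_le)
    by_cases hn : n < N
    · simp [hn]
    · simp only [hn, if_false]
      exact mod_cast hterm
  · filter_upwards [eventually_pow_le_natFloor_div hx₀ hx₁ hc.ne' hz, eventually_ge_atTop N]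
      with n hn hN
    rwa [if_neg hN.not_gt]

lemma exists_tsum_natCast_mul_pow_eq (hx₀ : x ≠ 0) (hx₁ : x < 1) (N : ℕ) {r : ℝ≥0}
    (hr : r ≠ 0) :
    ∃ c : ℕ → ℕ, (∀ n < N, c n = 0) ∧ ∑' n, (c n : ℝ≥0∞) * x ^ n = r ∧
      ∀ z < x⁻¹, ∀ᶠ n in atTop, z ^ n ≤ c n := by
  obtain ⟨e, he₀, he, he_growth⟩ :=
    exists_tsum_natCast_mul_pow_lt hx₀ hx₁ N (ENNReal.coe_ne_zero.2 hr)
  lift ∑' n, (e n : ℝ≥0∞) * x ^ n to ℝ≥0 using he.ne_top with t ht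
  obtain ⟨d, hd₀, hd⟩ := exists_hasSum_natCast_mul_pow hx₀ hx₁ N (r - t)
  have hd' : ∑' n, (d n : ℝ≥0∞) * x ^ n = (r - t : ℝ≥0) :=
    mod_cast (ENNReal.hasSum_coe.2 hd).tsum_eq
  refine ⟨e + d, fun n hn ↦ by simp [he₀ n hn, hd₀ n hn], ?_, fun z hz ↦ ?_⟩
  · simp only [Pi.add_apply, Nat.cast_add, add_mul]
    rw [ENNReal.tsum_add, ← ht, hd', ← ENNReal.coe_add,
      add_tsub_cancel_of_le (ENNReal.coe_lt_coe.1 he).le]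
  · filter_upwards [he_growth z hz] with n hn
    exact hn.trans (mod_cast Nat.le_add_right (e n) (d n))

end PowerSeries

lemma tendsto_atTop_of_forall_lt_eventually_pow_le {R : ℝ≥0} (hR : 1 < R) {c : ℕ → ℕ}
    (hc : ∀ z < R, ∀ᶠ n in atTop, z ^ n ≤ c n) : Tendsto c atTop atTop := by
  obtain ⟨z, hz₁, hzR⟩ := exists_between hR
  exact tendsto_natCast_atTop_iff.1 <|
    tendsto_atTop_mono' _ (hc z hzR) (tendsto_pow_atTop_atTop_of_one_lt hz₁)

lemma tendsto_rpow_inv_of_eventually_pow_le {u : ℕ → ℝ≥0∞} {R : ℝ≥0∞}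
    (hlower : ∀ z < R, ∀ᶠ n in atTop, z ^ n ≤ u n)
    (hupper : ∀ z > R, ∀ᶠ n in atTop, u n ≤ z ^ n) :
    Tendsto (fun n : ℕ ↦ u n ^ (n : ℝ)⁻¹) atTop (𝓝 R) := by
  refine tendsto_order.2 ⟨fun y hy ↦ ?_, fun y hy ↦ ?_⟩
  · obtain ⟨z, hyz, hzR⟩ := exists_between hy
    filter_upwards [hlower z hzR, eventually_ne_atTop 0] with n hn hn₀
    calc
      y < z := hyz
      _ = (z ^ n) ^ (n : ℝ)⁻¹ := (ENNReal.pow_rpow_inv_natCast hn₀ z).symm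
      _ ≤ u n ^ (n : ℝ)⁻¹ := by gcongr
  · obtain ⟨z, hRz, hzy⟩ := exists_between hy
    filter_upwards [hupper z hRz, eventually_ne_atTop 0] with n hn hn₀
    calc
      u n ^ (n : ℝ)⁻¹ ≤ (z ^ n) ^ (n : ℝ)⁻¹ := by gcongr
      _ = z := ENNReal.pow_rpow_inv_natCast hn₀ z
      _ < y := hzy

lemma eventually_le_inv_pow_of_tsum_ne_top {u : ℕ → ℝ≥0∞} {x : ℝ≥0∞}
    (hu : ∑' n, u n * x ^ n ≠ ⊤) : ∀ᶠ n in atTop, u n ≤ x⁻¹ ^ n := by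
  have hlim := ENNReal.tendsto_atTop_zero_of_tsum_ne_top hu
  filter_upwards [hlim.eventually_le_const zero_lt_one] with n hn
  rwa [← ENNReal.inv_pow, ENNReal.le_inv_iff_mul_le]

theorem exists_ge_tsum_natCast_mul_pow_eq {x : ℝ≥0} (hx₀ : x ≠ 0) (hx₁ : x < 1) {a : ℕ → ℕ}
    {s : ℝ≥0} (ha : ∑' n, (a n : ℝ≥0∞) * x ^ n < s) (N : ℕ) :
    ∃ b : ℕ → ℕ, (∀ n < N, b n = a n) ∧ (∀ n, a n ≤ b n) ∧
      Tendsto (fun n ↦ b n - a n) atTop atTop ∧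
      Tendsto (fun n : ℕ ↦ (b n : ℝ≥0∞) ^ (n : ℝ)⁻¹) atTop (𝓝 (x : ℝ≥0∞)⁻¹) ∧
      ∑' n, (b n : ℝ≥0∞) * x ^ n = s := by
  lift ∑' n, (a n : ℝ≥0∞) * x ^ n to ℝ≥0 using ha.ne_top with t ht
  have hts : t < s := ENNReal.coe_lt_coe.1 ha
  obtain ⟨c, hc₀, hc, hc_growth⟩ :=
    exists_tsum_natCast_mul_pow_eq hx₀ hx₁ N (tsub_pos_of_lt hts).ne'
  have hb : ∑' n, ((a n + c n : ℕ) : ℝ≥0∞) * x ^ n = s := by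
    simp only [Nat.cast_add, add_mul]
    rw [ENNReal.tsum_add, ← ht, hc, ← ENNReal.coe_add, add_tsub_cancel_of_le hts.le]
  refine ⟨fun n ↦ a n + c n, fun n hn ↦ by simp [hc₀ n hn], fun n ↦ Nat.le_add_right _ _, ?_,
    tendsto_rpow_inv_of_eventually_pow_le (fun z hz ↦ ?_) (fun z hz ↦ ?_), hb⟩
  · simpa using tendsto_atTop_of_forall_lt_eventually_pow_le
      (one_lt_inv₀ (pos_iff_ne_zero.2 hx₀) |>.2 hx₁) hc_growth
  · lift z to ℝ≥0 using hz.ne_top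
    rw [← ENNReal.coe_inv hx₀, ENNReal.coe_lt_coe] at hz
    filter_upwards [hc_growth z hz] with n hn
    exact mod_cast hn.trans (mod_cast Nat.le_add_left (c n) (a n))
  · filter_upwards [eventually_le_inv_pow_of_tsum_ne_top (hb.trans_ne ENNReal.coe_ne_top)] with n hn
    exact hn.trans (pow_le_pow_left' hz.le n)

/-- completion of a sequence of nonnegative integers to one with
`Σ bₙ Dⁿ = 1` and `limsup bₙ^{1/n} = D⁻¹`. -/
theorem stmt_17 (D : ℝ) (hD : D ∈ Set.Ioo (0 : ℝ) 1) (a : ℕ → ℕ)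
    (ha : ∑' n : ℕ, (a (n + 2) : ℝ≥0∞) * ENNReal.ofReal D ^ (n + 2)
      < ENNReal.ofReal (1 - D)) :
    ∃ b : ℕ → ℕ,
      b 1 = 1 ∧
      (∀ n : ℕ, 2 ≤ n → a n ≤ b n) ∧
      {n : ℕ | a n + 2 ≤ b n}.Infinite ∧
      Filter.limsup (fun n : ℕ => ((b n : ℝ≥0∞)) ^ ((n : ℝ)⁻¹)) Filter.atTop
        = ENNReal.ofReal D⁻¹ ∧
      ∑' n : ℕ, (b (n + 1) : ℝ≥0∞) * ENNReal.ofReal D ^ (n + 1) = 1 := by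
  lift D to ℝ≥0 using hD.1.le
  have hD₀ : D ≠ 0 := mod_cast hD.1.ne'
  have hD₁ : D < 1 := mod_cast hD.2
  rw [← NNReal.coe_inv]
  rw [ENNReal.ofReal_sub 1 D.coe_nonneg] at ha
  simp only [ENNReal.ofReal_coe_nnreal, ENNReal.ofReal_one] at ha ⊢
  let a' : ℕ → ℕ := fun | 0 => 0 | 1 => 1 | n + 2 => a (n + 2)
  have haa' : ∀ n, 2 ≤ n → a' n = a n := fun | n + 2, _ => rfl
  have ha' : ∑' n, (a' n : ℝ≥0∞) * D ^ n < (1 : ℝ≥0) := by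
    rw [tsum_eq_zero_add' ENNReal.summable, tsum_eq_zero_add' ENNReal.summable]
    simpa [a'] using lt_tsub_iff_left.1 ha
  obtain ⟨b, hb_eq, hab, hb_sub, hb_root, hb_sum⟩ :=
    exists_ge_tsum_natCast_mul_pow_eq hD₀ hD₁ ha' 2
  refine ⟨b, hb_eq 1 one_lt_two, fun n hn ↦ haa' n hn ▸ hab n, ?_, ?_, ?_⟩
  · refine Nat.frequently_atTop_iff_infinite.1 (Eventually.frequently ?_)
    filter_upwards [hb_sub.eventually_ge_atTop 2, eventually_ge_atTop 2] with n hn hn₂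
    have := haa' n hn₂
    omega
  · rw [hb_root.limsup_eq, ENNReal.coe_inv hD₀]
  · rw [tsum_eq_zero_add' ENNReal.summable] at hb_sum
    simpa [hb_eq 0 zero_lt_two, a'] using hb_sum
end

section
/- Every strongly connected row-finite countable directed graph with infinitely many vertices contains an exit path. -/
open scoped ENNReal NNReal Classical
open Filter MeasureTheory

/-!
Fix a vertex `v` from which infinitely many vertices can be reached, and keep only the edges along
which the distance from `v` increases by one. A shortest path from `v` uses only such edges, so they
still reach every vertex reachable from `v`. If no infinite path along them started at `v`,
well-founded induction and finite branching would leave only finitely many reachable vertices. Along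
the resulting infinite path the distance from `v` is strictly increasing, so no vertex is repeated
and the path eventually leaves every finite set.
-/

section Koenig

variable {α : Type*} {r : α → α → Prop} {a : α}

theorem finite_setOf_reflTransGen_of_acc (hfin : ∀ a, {b | r a b}.Finite) (ha : Acc (flip r) a) :
    {b | Relation.ReflTransGen r a b}.Finite := by
  induction ha with
  | intro a _ ih =>
    refine (((hfin a).biUnion ih).insert a).subset fun b hab ↦ ?_
    obtain rfl | ⟨c, hac, hcb⟩ := hab.cases_head
    · exact Set.mem_insert a _
    · exact Set.mem_insert_of_mem _ (Set.mem_biUnion hac hcb)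

theorem exists_chain_of_infinite_setOf_reflTransGen (hfin : ∀ a, {b | r a b}.Finite)
    (ha : {b | Relation.ReflTransGen r a b}.Infinite) :
    ∃ t : ℕ → α, t 0 = a ∧ ∀ n, r (t n) (t (n + 1)) :=
  not_acc_iff_exists_descending_chain.1 fun hacc ↦ ha (finite_setOf_reflTransGen_of_acc hfin hacc)

end Koenig

namespace DirGraph

variable {G : DirGraph} {u v w : G.V} {μ : List G.E} {e : G.E}

variable (G) in
/-- Adjacency of vertices: some edge leads from `u` to `w`. -/
def Adj (u w : G.V) : Prop := ∃ e : G.E, G.s e = u ∧ G.r e = w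

variable (G) in
/-- Reachability: some finite path, possibly empty, leads from `u` to `w`. -/
def Reachable (u w : G.V) : Prop := ∃ μ : List G.E, G.IsPathFrom μ u w

variable (G) in
/-- The directed distance, i.e. the least length of a finite path from `u` to `w`. It takes the junk
value `0` when `w` is not reachable from `u`. -/
noncomputable def dist (u w : G.V) : ℕ := sInf {n | ∃ μ, G.IsPathFrom μ u w ∧ μ.length = n}

variable (G) in
/-- A geodesic step with respect to the root `v`: an adjacent pair of vertices along which the
distance from `v` increases by one. -/
def IsGeodesicStep (v u w : G.V) : Prop := G.Adj u w ∧ G.dist v w = G.dist v u + 1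

theorem RowFinite.finite_setOf_adj (hG : G.RowFinite) (u : G.V) : {w | G.Adj u w}.Finite :=
  (hG u).image G.r

theorem isExitPath_of_injective {t : ℕ → G.V} (hadj : ∀ i, G.Adj (t i) (t (i + 1)))
    (ht : t.Injective) : G.IsExitPath t := by
  refine ⟨hadj, fun M hM ↦ eventually_atTop.1 ?_⟩
  rw [← Nat.cofinite_eq_atTop]
  exact ht.tendsto_cofinite.eventually hM.compl_mem_cofinite

theorem isPath_iff_isChain : G.IsPath μ ↔ μ.IsChain fun e f ↦ G.r e = G.s f := Iff.rfl

theorem isPathFrom_nil : G.IsPathFrom [] u w ↔ u = w := by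
  simp [IsPathFrom, isPath_iff_isChain]

theorem isPathFrom_concat :
    G.IsPathFrom (μ ++ [e]) u w ↔ G.IsPathFrom μ u (G.s e) ∧ G.r e = w := by
  simp only [IsPathFrom, isPath_iff_isChain, List.isChain_append, List.head?_append,
    List.getLast?_concat]
  cases μ <;> grind

theorem IsPathFrom.dist_le (hμ : G.IsPathFrom μ u w) : G.dist u w ≤ μ.length :=
  Nat.sInf_le ⟨μ, hμ, rfl⟩

theorem Reachable.exists_isPathFrom_length_eq_dist (h : G.Reachable u w) :
    ∃ μ, G.IsPathFrom μ u w ∧ μ.length = G.dist u w :=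
  let ⟨μ, hμ⟩ := h
  Nat.sInf_mem (s := {n | ∃ μ, G.IsPathFrom μ u w ∧ μ.length = n}) ⟨_, μ, hμ, rfl⟩

theorem Reachable.dist_r_le (h : G.Reachable v (G.s e)) :
    G.dist v (G.r e) ≤ G.dist v (G.s e) + 1 := by
  obtain ⟨μ, hμ, hlen⟩ := h.exists_isPathFrom_length_eq_dist
  simpa [hlen] using (isPathFrom_concat.2 ⟨hμ, rfl⟩ : G.IsPathFrom (μ ++ [e]) v (G.r e)).dist_le

theorem IsPathFrom.reflTransGen_isGeodesicStep (hμ : G.IsPathFrom μ v w)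
    (hlen : μ.length = G.dist v w) : Relation.ReflTransGen (G.IsGeodesicStep v) v w := by
  induction μ using List.reverseRecOn generalizing w with
  | nil => rw [isPathFrom_nil.1 hμ]
  | append_singleton μ e ih =>
    obtain ⟨hprefix, rfl⟩ := isPathFrom_concat.1 hμ
    rw [List.length_append, List.length_singleton] at hlen
    have hprefix_len : μ.length = G.dist v (G.s e) := by
      have hle : G.dist v (G.s e) ≤ μ.length := hprefix.dist_le
      have hge : G.dist v (G.r e) ≤ G.dist v (G.s e) + 1 := Reachable.dist_r_le ⟨μ, hprefix⟩
      lia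
    exact (ih hprefix hprefix_len).tail ⟨⟨e, rfl, rfl⟩, by rw [← hlen, hprefix_len]⟩

theorem Reachable.reflTransGen_isGeodesicStep (h : G.Reachable v w) :
    Relation.ReflTransGen (G.IsGeodesicStep v) v w := by
  obtain ⟨μ, hμ, hlen⟩ := h.exists_isPathFrom_length_eq_dist
  exact hμ.reflTransGen_isGeodesicStep hlen

theorem injective_of_isGeodesicStep {t : ℕ → G.V}
    (ht : ∀ n, G.IsGeodesicStep v (t n) (t (n + 1))) : t.Injective := by
  have hmono : StrictMono fun n ↦ G.dist v (t n) :=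
    strictMono_nat_of_lt_succ fun n ↦ (ht n).2 ▸ Nat.lt_succ_self _
  exact hmono.injective.of_comp (f := G.dist v)

end DirGraph

theorem stmt_18_general (G : DirGraph) (hfin : ∀ u, {w | G.Adj u w}.Finite) (v : G.V)
    (hv : {w | G.Reachable v w}.Infinite) :
    ∃ t : ℕ → G.V, t 0 = v ∧ t.Injective ∧ G.IsExitPath t := by
  have hfin_step (u : G.V) : {w | G.IsGeodesicStep v u w}.Finite :=
    (hfin u).subset fun _ hw ↦ hw.1
  have hv_step : {w | Relation.ReflTransGen (G.IsGeodesicStep v) v w}.Infinite :=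
    hv.mono fun _ hw ↦ hw.reflTransGen_isGeodesicStep
  obtain ⟨t, ht_zero, ht⟩ := exists_chain_of_infinite_setOf_reflTransGen hfin_step hv_step
  have ht_inj : t.Injective := DirGraph.injective_of_isGeodesicStep ht
  exact ⟨t, ht_zero, ht_inj, DirGraph.isExitPath_of_injective (fun i ↦ (ht i).1) ht_inj⟩

/-- every strongly connected row-finite graph with infinitely many
vertices contains an exit path. -/
theorem stmt_18 (G : DirGraph) (hSC : G.StronglyConnected) (hRF : G.RowFinite)
    (hInf : Infinite G.V) :
    ∃ t : ℕ → G.V, G.IsExitPath t := by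
  obtain ⟨v⟩ := hInf.nonempty
  exact (stmt_18_general G hRF.finite_setOf_adj v (Set.infinite_univ.mono fun w _ ↦ hSC v w)).imp
    fun _ ht ↦ ht.2.2
end
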